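/- arXiv:1804.01423 — 3 statements merged into one kernel-verified Lean document; each statement's English description precedes it below -/
import Mathlib

section
/- Let (g, d) be a differential Lie algebra over a field K, i.e., g is a Lie algebra with bracket [-,-] and d : g → g is a linear map satisfying d ∘ d = 0 and d[x,y] = [dx,y] + [x,dy] for all x, y in g. Then the derived bracket [x,y]_d := [x, dy] satisfies the Leibniz identity [x,[y,z]_d]_d = [[x,y]_d, z]_d - [[x,z]_d, y]_d for all x, y, z in g; hence (g, [-,-]_d) is a Leibniz algebra. -/
/- Since `d ∘ d = 0`, the derivation rule collapses to `d ⁅y, d z⁆ = ⁅d y, d z⁆`: `d` carries the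
derived bracket to the Lie bracket. The Leibniz identity for the derived bracket is then the Jacobi
identity for `x`, `d y`, `d z`, read as saying that bracketing on the right is a derivation. -/

section

variable {L : Type*} [LieRing L]

theorem lie_lie_eq_lie_lie_sub_lie_lie (x y z : L) : ⁅x, ⁅y, z⁆⁆ = ⁅⁅x, y⁆, z⁆ - ⁅⁅x, z⁆, y⁆ := by
  rw [leibniz_lie, ← lie_skew y ⁅x, z⁆, sub_eq_add_neg]

theorem map_lie_map_of_map_map_eq_zero {d : L → L} (hd2 : ∀ x, d (d x) = 0)
    (hder : ∀ x y, d ⁅x, y⁆ = ⁅d x, y⁆ + ⁅x, d y⁆) (x y : L) : d ⁅x, d y⁆ = ⁅d x, d y⁆ := by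
  rw [hder, hd2, lie_zero, add_zero]

theorem lie_map_lie_map_eq_sub {T : L → L} (hT : ∀ x y, T ⁅x, T y⁆ = ⁅T x, T y⁆) (x y z : L) :
    ⁅x, T ⁅y, T z⁆⁆ = ⁅⁅x, T y⁆, T z⁆ - ⁅⁅x, T z⁆, T y⁆ := by
  rw [hT, lie_lie_eq_lie_lie_sub_lie_lie]

theorem derived_bracket_is_leibniz_general {d : L → L} (hd2 : ∀ x, d (d x) = 0)
    (hder : ∀ x y, d ⁅x, y⁆ = ⁅d x, y⁆ + ⁅x, d y⁆) (x y z : L) :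
    ⁅x, d ⁅y, d z⁆⁆ = ⁅⁅x, d y⁆, d z⁆ - ⁅⁅x, d z⁆, d y⁆ :=
  lie_map_lie_map_eq_sub (map_lie_map_of_map_map_eq_zero hd2 hder) x y z

end

/-- If `(g, d)` is a differential Lie algebra (a Lie algebra with a linear map
`d : g → g` satisfying `d ∘ d = 0` which is a derivation of the Lie bracket), then the
derived bracket `[x,y]_d := [x, d y]` satisfies the Leibniz identity
`[x,[y,z]_d]_d = [[x,y]_d, z]_d - [[x,z]_d, y]_d`; hence `(g, [-,-]_d)` is a Leibniz
algebra. -/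
theorem derived_bracket_is_leibniz
    {K : Type*} [Field K] {g : Type*} [LieRing g] [LieAlgebra K g]
    (d : g →ₗ[K] g)
    (hd2 : ∀ x : g, d (d x) = 0)
    (hder : ∀ x y : g, d ⁅x, y⁆ = ⁅d x, y⁆ + ⁅x, d y⁆) :
    ∀ x y z : g, ⁅x, d ⁅y, d z⁆⁆ = ⁅⁅x, d y⁆, d z⁆ - ⁅⁅x, d z⁆, d y⁆ :=
  derived_bracket_is_leibniz_general hd2 hder
end

section
/- Let g be a Leibniz algebra over a field K and A a K-vector space. For an n-multilinear map c : gⁿ → A, define the (n+1)-multilinear map δc by (δc)(x₁,…,x_{n+1}) = Σ_{1 ≤ i < j ≤ n+1} (-1)ʲ c(x₁,…,x_{i-1},[x_i,x_j],x_{i+1},…,x̂_j,…,x_{n+1}), where x̂_j means that the argument x_j is omitted. Then δ(δc) = 0 for every n-multilinear map c : gⁿ → A. -/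
/-- The tuple `(x₁, …, x_{i-1}, [x_i,x_j], x_{i+1}, …, x̂_j, …, x_{n+1})` obtained from
`(x₁, …, x_{n+1})` by replacing the `i`-th entry with the bracket `[x_i, x_j]` and
omitting the `j`-th entry (for `i < j`), written with 0-based indices. -/
def leibnizCochainTuple {g : Type*} (b : g → g → g) {n : ℕ}
    (x : Fin (n + 1) → g) (i j : Fin (n + 1)) : Fin n → g :=
  fun k =>
    if (k : ℕ) = (i : ℕ) then b (x i) (x j)
    else if h : (k : ℕ) < (j : ℕ) then x ⟨(k : ℕ), by omega⟩
    else x ⟨(k : ℕ) + 1, by omega⟩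

/-- The Leibniz coboundary of an `n`-cochain `c : gⁿ → A`:
`(δc)(x₁,…,x_{n+1}) = Σ_{1 ≤ i < j ≤ n+1} (-1)ʲ c(x₁,…,x_{i-1},[x_i,x_j],…,x̂_j,…,x_{n+1})`
(the sign `(-1)ʲ` refers to the 1-based index `j`). -/
def leibnizDelta {g A : Type*} [AddCommGroup A] (b : g → g → g) {n : ℕ}
    (c : (Fin n → g) → A) : (Fin (n + 1) → g) → A :=
  fun x => ∑ p : Fin (n + 1) × Fin (n + 1),
    if p.1 < p.2 then
      ((-1 : ℤ) ^ ((p.2 : ℕ) + 1)) • c (leibnizCochainTuple b x p.1 p.2)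
    else 0

/-!
For a cochain `c` and `y : g`, let `ι_y c` be `c` with its last argument fixed to `y`, and let
`θ_y c` be the sum over all positions of `c` with the entry `u` there replaced by `[u, y]`. Then
`ι_y δ = δ ι_y ± θ_y` (Cartan's formula) and `ι_z θ_y = θ_y ι_z + ι_{[z, y]}`. A cochain with at
least one argument is determined by its contractions `ι_y c`, so by induction on the number of
arguments the Leibniz identity gives `θ_{[y, z]} = θ_y θ_z - θ_z θ_y`, which in turn gives
`θ_y δ = δ θ_y`, which finally gives `δ δ = 0`.
-/

/-- The `n`-cochains on `g` with values in `A`. No multilinearity is imposed, because `leibnizDelta`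
acts on arbitrary functions. -/
abbrev LeibnizCochain (g A : Type*) (n : ℕ) : Type _ := (Fin n → g) → A

namespace LeibnizCochain

variable {g A : Type*} [AddCommGroup A] {n : ℕ}

/-- The Leibniz coboundary `δ = leibnizDelta b` as a homomorphism of groups of cochains. -/
def coboundary (b : g → g → g) : LeibnizCochain g A n →+ LeibnizCochain g A (n + 1) where
  toFun := leibnizDelta b
  map_zero' := by
    ext x
    simp [leibnizDelta]
  map_add' c d := by
    ext x
    simp only [leibnizDelta, Pi.add_apply, smul_add, ← Finset.sum_add_distrib, ite_add_ite,
      add_zero]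

/-- The Lie derivative `θ_y` of cochains, dual to the right action of `y` on tensor powers of `g`
by `(x₁ ⊗ ⋯ ⊗ xₙ) · y = ∑ᵢ x₁ ⊗ ⋯ ⊗ [xᵢ, y] ⊗ ⋯ ⊗ xₙ`. -/
def lieDerivative (b : g → g → g) (y : g) : LeibnizCochain g A n →+ LeibnizCochain g A n where
  toFun c x := ∑ i, c (Function.update x i (b (x i) y))
  map_zero' := by
    ext x
    simp
  map_add' c d := by
    ext x
    simp [Finset.sum_add_distrib]

/-- The contraction `ι_y`, which fixes the last argument of a cochain to be `y`. -/
def contractLast (y : g) : LeibnizCochain g A (n + 1) →+ LeibnizCochain g A n where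
  toFun c x := c (Fin.snoc x y)
  map_zero' := rfl
  map_add' _ _ := rfl

theorem coboundary_apply (b : g → g → g) (c : LeibnizCochain g A n) (x : Fin (n + 1) → g) :
    coboundary b c x = ∑ j : Fin (n + 1), ∑ i : Fin (n + 1), if i < j then
      (-1 : ℤ) ^ ((j : ℕ) + 1) • c (leibnizCochainTuple b x i j) else 0 :=
  Fintype.sum_prod_type_right _

theorem lieDerivative_apply (b : g → g → g) (y : g) (c : LeibnizCochain g A n) (x : Fin n → g) :
    lieDerivative b y c x = ∑ i, c (Function.update x i (b (x i) y)) :=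
  rfl

theorem contractLast_apply (y : g) (c : LeibnizCochain g A (n + 1)) (x : Fin n → g) :
    contractLast y c x = c (Fin.snoc x y) :=
  rfl

theorem ext_contractLast {c d : LeibnizCochain g A (n + 1)}
    (h : ∀ y, contractLast y c = contractLast y d) : c = d := by
  ext x
  simpa only [contractLast_apply, Fin.snoc_init_self] using
    congrFun (h (x (Fin.last n))) (Fin.init x)

theorem lieDerivative_degree_zero (b : g → g → g) (y : g) (c : LeibnizCochain g A 0) :
    lieDerivative b y c = 0 := by
  ext x
  simp [lieDerivative_apply]

theorem coboundary_degree_zero (b : g → g → g) (c : LeibnizCochain g A 0) :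
    coboundary b c = 0 := by
  ext x
  simp [coboundary_apply]

theorem contractLast_lieDerivative (b : g → g → g) (y z : g) (c : LeibnizCochain g A (n + 1)) :
    contractLast z (lieDerivative b y c) =
      lieDerivative b y (contractLast z c) + contractLast (b z y) c := by
  ext x
  simp [contractLast_apply, lieDerivative_apply, Fin.sum_univ_castSucc, Fin.snoc_update,
    Fin.update_snoc_last]

theorem leibnizCochainTuple_snoc_castSucc (b : g → g → g) (x : Fin (n + 1) → g) (y : g)
    {i j : Fin (n + 1)} (hij : i < j) :
    leibnizCochainTuple b (Fin.snoc x y : Fin (n + 2) → g) i.castSucc j.castSucc =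
      Fin.snoc (leibnizCochainTuple b x i j) y := by
  ext k
  cases k using Fin.lastCases with
  | last =>
    have last_ne : (Fin.last n : ℕ) ≠ i.castSucc := by
      rw [Fin.val_last, Fin.val_castSucc]
      omega
    have last_not_lt : ¬(Fin.last n : ℕ) < j.castSucc := by
      rw [Fin.val_last, Fin.val_castSucc]
      omega
    rw [Fin.snoc_last, leibnizCochainTuple, if_neg last_ne, dif_neg last_not_lt]
    exact Fin.snoc_last (α := fun _ => g) y x
  | cast k =>
    rw [Fin.snoc_castSucc]
    simp only [leibnizCochainTuple, Fin.val_castSucc, Fin.snoc_castSucc]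
    split_ifs
    · rfl
    · exact Fin.snoc_castSucc (α := fun _ => g) y x ⟨k, by omega⟩
    · exact Fin.snoc_castSucc (α := fun _ => g) y x ⟨k + 1, by omega⟩

theorem leibnizCochainTuple_snoc_last (b : g → g → g) (x : Fin n → g) (y : g) (i : Fin n) :
    leibnizCochainTuple b (Fin.snoc x y : Fin (n + 1) → g) i.castSucc (Fin.last n) =
      Function.update x i (b (x i) y) := by
  ext k
  have hk : (k : ℕ) < Fin.last n := k.isLt
  simp only [leibnizCochainTuple, hk, dif_pos, Fin.snoc_castSucc, Fin.snoc_last,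
    Function.update_apply, Fin.ext_iff, Fin.val_castSucc]
  exact congrArg (ite _ _) (Fin.snoc_castSucc (α := fun _ => g) y x k)

theorem contractLast_coboundary (b : g → g → g) (y : g) (c : LeibnizCochain g A (n + 1)) :
    contractLast y (coboundary b c) =
      coboundary b (contractLast y c) + (-1 : ℤ) ^ n • lieDerivative b y c := by
  ext x
  simp only [Pi.add_apply, Pi.smul_apply, contractLast_apply, coboundary_apply,
    lieDerivative_apply]
  rw [Fin.sum_univ_castSucc]
  congr 1
  · refine Finset.sum_congr rfl fun j _ => ?_
    rw [Fin.sum_univ_castSucc, if_neg (Fin.castSucc_lt_last j).not_gt, add_zero]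
    refine Finset.sum_congr rfl fun i _ => ?_
    simp only [Fin.castSucc_lt_castSucc_iff, Fin.val_castSucc]
    split_ifs with hij
    · rw [leibnizCochainTuple_snoc_castSucc b x y hij]
    · rfl
  · rw [Fin.sum_univ_castSucc, if_neg (lt_irrefl _), add_zero, Finset.smul_sum]
    refine Finset.sum_congr rfl fun i _ => ?_
    rw [if_pos (Fin.castSucc_lt_last i), leibnizCochainTuple_snoc_last, Fin.val_last, pow_succ,
      pow_succ, mul_assoc, neg_one_mul, neg_neg, mul_one]

section Multilinear

variable {R : Type*} [CommSemiring R] [AddCommGroup g] [Module R g] [Module R A]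

/-- The contraction `ι_y` of a multilinear cochain, as a multilinear map. -/
def contractLastMultilinear (y : g) (c : MultilinearMap R (fun _ : Fin (n + 1) => g) A) :
    MultilinearMap R (fun _ : Fin n => g) A :=
  (LinearMap.applyₗ y).compMultilinearMap c.curryRight

theorem coe_contractLastMultilinear (y : g) (c : MultilinearMap R (fun _ : Fin (n + 1) => g) A) :
    ⇑(contractLastMultilinear y c) = contractLast y c :=
  rfl

theorem contractLast_sub (y z : g) (c : MultilinearMap R (fun _ : Fin (n + 1) => g) A) :
    contractLast (y - z) c = contractLast y c - contractLast z c :=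
  funext fun x => map_sub (c.curryRight x) y z

variable {b : g → g → g}

theorem lieDerivative_bracket (hb : ∀ x y z : g, b x (b y z) = b (b x y) z - b (b x z) y)
    (y z : g) (c : MultilinearMap R (fun _ : Fin n => g) A) :
    lieDerivative b (b y z) c =
      lieDerivative b y (lieDerivative b z c) - lieDerivative b z (lieDerivative b y c) := by
  induction n with
  | zero => simp only [lieDerivative_degree_zero, sub_zero]
  | succ n ih =>
    refine ext_contractLast fun u => ?_
    have ih_u := ih (contractLastMultilinear u c)
    rw [coe_contractLastMultilinear] at ih_u
    simp only [map_sub, contractLast_lieDerivative, map_add, ih_u, hb, contractLast_sub]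
    abel

theorem lieDerivative_coboundary (hb : ∀ x y z : g, b x (b y z) = b (b x y) z - b (b x z) y)
    (y : g) (c : MultilinearMap R (fun _ : Fin n => g) A) :
    lieDerivative b y (coboundary b c) = coboundary b (lieDerivative b y c) := by
  induction n with
  | zero => simp only [coboundary_degree_zero, map_zero]
  | succ n ih =>
    refine ext_contractLast fun z => ?_
    have ih_z := ih (contractLastMultilinear z c)
    rw [coe_contractLastMultilinear] at ih_z
    simp only [contractLast_lieDerivative, contractLast_coboundary, map_add, map_zsmul, ih_z,
      lieDerivative_bracket hb, smul_sub]
    abel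

theorem coboundary_coboundary (hb : ∀ x y z : g, b x (b y z) = b (b x y) z - b (b x z) y)
    (c : MultilinearMap R (fun _ : Fin n => g) A) :
    coboundary b (coboundary b c) = 0 := by
  induction n with
  | zero => rw [coboundary_degree_zero, map_zero]
  | succ n ih =>
    refine ext_contractLast fun y => ?_
    have ih_y := ih (contractLastMultilinear y c)
    rw [coe_contractLastMultilinear] at ih_y
    simp only [contractLast_coboundary, map_add, map_zsmul, map_zero, ih_y,
      lieDerivative_coboundary hb, pow_succ, mul_neg, mul_one, neg_smul]
    abel

end Multilinear

end LeibnizCochain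

theorem leibniz_delta_squared_zero_general
    {R : Type*} [CommSemiring R] {g : Type*} [AddCommGroup g] [Module R g]
    {A : Type*} [AddCommGroup A] [Module R A]
    (b : g → g → g)
    (hleib : ∀ x y z : g, b x (b y z) = b (b x y) z - b (b x z) y)
    {n : ℕ} (c : MultilinearMap R (fun _ : Fin n => g) A) :
    leibnizDelta b (leibnizDelta b ⇑c) = 0 :=
  LeibnizCochain.coboundary_coboundary hleib c

/-- For a Leibniz algebra `g` over a field `K` and a `K`-vector space `A`, the Leibniz
coboundary satisfies `δ(δc) = 0` for every `n`-multilinear cochain `c : gⁿ → A`. -/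
theorem leibniz_delta_squared_zero
    {K : Type*} [Field K] {g : Type*} [AddCommGroup g] [Module K g]
    {A : Type*} [AddCommGroup A] [Module K A]
    (b : g →ₗ[K] g →ₗ[K] g)
    (hleib : ∀ x y z : g, b x (b y z) = b (b x y) z - b (b x z) y)
    {n : ℕ} (c : MultilinearMap K (fun _ : Fin n => g) A) :
    ∀ x : Fin (n + 2) → g,
      leibnizDelta (fun u v => b u v) (leibnizDelta (fun u v => b u v) ⇑c) x = 0 :=
  congrFun (leibniz_delta_squared_zero_general (fun u v => b u v) hleib c)
end

section
/- Let g be a Leibniz algebra over a field K and A a commutative associative K-algebra. For multilinear cochains c : gᵖ → A and d : g^q → A, the Leibniz coboundary δ and the shuffle cup product ∪ satisfy the derivation formula δ(c∪d) = (δc)∪d + (-1)ᵖ c∪(δd). -/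
/-- `σ` is an `(a,b)`-shuffle: a permutation of `{1,…,a+b}` (here `Fin (a+b)`, 0-based)
which is strictly increasing on the first `a` indices and on the last `b` indices. -/
def IsShuffle (a b : ℕ) (σ : Equiv.Perm (Fin (a + b))) : Prop :=
  (∀ i j : Fin (a + b), (i : ℕ) < (j : ℕ) → (j : ℕ) < a → σ i < σ j) ∧
  (∀ i j : Fin (a + b), (i : ℕ) < (j : ℕ) → a ≤ (i : ℕ) → σ i < σ j)

open scoped Classical

/-- The shuffle cup product of cochains `c : g^{p+1} → A` and `d : g^{q+1} → A` with
values in a commutative associative algebra `A`: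
`(c∪d)(x₁,…,x_{p+q+2}) = Σ_σ sgn(σ) c(x₁, x_{1+σ(1)},…,x_{1+σ(p)}) ⬝ d(x_{1+σ(p+1)},…,x_{1+σ(p+q+1)})`,
the sum being over all `(p, q+1)`-shuffles `σ` (0-based indexing in the formula below). -/
noncomputable def cupProd {g A : Type*} [CommRing A] {p q : ℕ}
    (c : (Fin (p + 1) → g) → A) (d : (Fin (q + 1) → g) → A) :
    (Fin (p + q + 2) → g) → A :=
  fun x => ∑ σ : Equiv.Perm (Fin (p + (q + 1))),
    if IsShuffle p (q + 1) σ then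
      ((Equiv.Perm.sign σ : ℤˣ) : ℤ) •
        (c (fun i => if h : (i : ℕ) = 0 then x ⟨0, by omega⟩
              else x ⟨(σ ⟨(i : ℕ) - 1, by omega⟩ : ℕ) + 1, by omega⟩) *
         d (fun j => x ⟨(σ ⟨p + (j : ℕ), by omega⟩ : ℕ) + 1, by omega⟩))
    else 0

/-
Extending every `(p, q + 1)`-shuffle by a fixed leading position, `c ∪ d` is the signed sum over
the permutations that are increasing on the block of arguments of `c` and on that of `d`, with the
value `0` in the first block. In `δ(c ∪ d)`, the terms `[x_i, x_j]` with omitted index `j` split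
according to the block that receives `i`. On the other side, a term of `(δc) ∪ d` is a permutation
`τ` of one more position together with a place `l` of the first block, whose value `j = τ l` is
bracketed to the left. Deleting the place `l` and the value `j` leaves a permutation `σ` of the
previous kind, and `j ≠ 0` can be reinserted in exactly one place that keeps the block increasing.
Since `sgn τ = (-1)^(l+j) sgn σ`, the sign `(-1)^(l+1)` of `δc` becomes the sign `(-1)^(j+1)` of
`δ(c ∪ d)`. For the second block the place `l` is the position `p + 1 + l` of `τ`, whence the extra
factor `(-1)^(p+1)` in front of `c ∪ δd`.
-/

section StrictMonoInsert

variable {a : ℕ} {α : Type*} [LinearOrder α] {f : Fin a → α} {y : α}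

lemma existsUnique_strictMono_insertNth (hf : StrictMono f) (hy : y ∉ Set.range f) :
    ∃! l : Fin (a + 1), StrictMono (l.insertNth (α := fun _ => α) y f) := by
  simp only [Fin.strictMono_insertNth_iff, hf, true_and]
  refine existsUnique_of_exists_of_unique ?_ fun l l' hl hl' => ?_
  · obtain ⟨l, hl⟩ := (Set.toFinite
      {l : Fin (a + 1) | ∀ k, k.castSucc < l → f k < y}).exists_maximal
      ⟨0, fun k hk => absurd hk (Fin.not_lt_zero _)⟩
    refine ⟨l, hl.prop, fun k hlk => ?_⟩
    by_contra! hky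
    have hkl : k.succ ≤ l := hl.le_of_ge (fun k' hk' =>
      (hf.monotone (Fin.castSucc_lt_succ_iff.1 hk')).trans_lt
        (hky.lt_of_ne fun h => hy ⟨k, h⟩)) (hlk.trans k.castSucc_lt_succ.le)
    exact (hkl.trans hlk).not_gt k.castSucc_lt_succ
  · by_contra! hne
    wlog hlt : l < l' generalizing l l'
    · exact this l' l hl' hl hne.symm (hne.symm.lt_of_le (not_lt.1 hlt))
    have hl_last : l ≠ Fin.last a := (hlt.trans_le l'.le_last).ne
    exact lt_asymm (hl.2 (l.castPred hl_last) le_rfl) (hl'.1 (l.castPred hl_last) hlt)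

end StrictMonoInsert

section Rooted

variable {a n : ℕ} {r : Prop}

/-- A strictly increasing index function that takes the value `0` exactly if `r` holds. -/
def IsRootedBlock [NeZero n] (r : Prop) (f : Fin a → Fin n) : Prop :=
  StrictMono f ∧ (0 ∈ Set.range f ↔ r)

lemma zero_mem_range_succAbove_comp_iff [NeZero n] {j : Fin (n + 1)} (hj : j ≠ 0)
    {f : Fin a → Fin n} :
    0 ∈ Set.range (j.succAbove ∘ f) ↔ 0 ∈ Set.range f := by
  simp only [Set.mem_range, Function.comp_apply, Fin.succAbove_eq_zero_iff hj]

lemma isRootedBlock_succAbove_comp_iff [NeZero n] {j : Fin (n + 1)} (hj : j ≠ 0)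
    {f : Fin a → Fin n} :
    IsRootedBlock r (j.succAbove ∘ f) ↔ IsRootedBlock r f := by
  refine and_congr ?_ (iff_congr (zero_mem_range_succAbove_comp_iff hj) Iff.rfl)
  simp only [StrictMono, Function.comp_apply, Fin.succAbove_lt_succAbove_iff]

lemma isRootedBlock_insertNth_iff [NeZero n] {j : Fin (n + 1)} (hj : j ≠ 0)
    {f : Fin a → Fin n} {l : Fin (a + 1)} :
    IsRootedBlock r (l.insertNth (α := fun _ => Fin (n + 1)) j (j.succAbove ∘ f)) ↔
      IsRootedBlock r f ∧
        StrictMono (l.insertNth (α := fun _ => Fin (n + 1)) j (j.succAbove ∘ f)) := by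
  have hroot : 0 ∈ Set.range (l.insertNth (α := fun _ => Fin (n + 1)) j (j.succAbove ∘ f)) ↔
      0 ∈ Set.range (j.succAbove ∘ f) := by
    rw [Fin.range_insertNth]
    exact or_iff_right hj.symm
  rw [← isRootedBlock_succAbove_comp_iff hj, IsRootedBlock, IsRootedBlock, hroot]
  exact ⟨fun h => ⟨⟨((Fin.strictMono_insertNth_iff _ _ _).1 h.1).1, h.2⟩, h.1⟩,
    fun h => ⟨h.2, h.1.2⟩⟩

lemma existsUnique_isRootedBlock_insertNth [NeZero n] {j : Fin (n + 1)} (hj : j ≠ 0)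
    {f : Fin a → Fin n} (hf : IsRootedBlock r f) :
    ∃! l : Fin (a + 1),
      IsRootedBlock r (l.insertNth (α := fun _ => Fin (n + 1)) j (j.succAbove ∘ f)) := by
  simp only [isRootedBlock_insertNth_iff hj, hf, true_and]
  refine existsUnique_strictMono_insertNth ((Fin.strictMono_succAbove j).comp hf.1) ?_
  rintro ⟨k, hk⟩
  exact Fin.succAbove_ne j _ hk

lemma isRootedBlock_true_cons_succ_iff {f : Fin a → Fin n} :
    IsRootedBlock True (Fin.cons (α := fun _ => Fin (n + 1)) 0 (Fin.succ ∘ f)) ↔ StrictMono f := by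
  rw [IsRootedBlock, and_iff_left (iff_true_intro ⟨0, Fin.cons_zero _ _⟩), Fin.strictMono_cons]
  simp only [StrictMono, Function.comp_apply, Fin.succ_lt_succ_iff, Fin.succ_pos, implies_true,
    true_and]

lemma isRootedBlock_false_succ_comp_iff {f : Fin a → Fin n} :
    IsRootedBlock False (Fin.succ ∘ f) ↔ StrictMono f := by
  rw [IsRootedBlock, and_iff_left (by simp)]
  simp only [StrictMono, Function.comp_apply, Fin.succ_lt_succ_iff]

lemma IsRootedBlock.apply_zero [NeZero n] {f : Fin (a + 1) → Fin n}
    (hf : IsRootedBlock True f) : f 0 = 0 := by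
  obtain ⟨k, hk⟩ := hf.2.2 trivial
  exact nonpos_iff_eq_zero.1 (hk ▸ hf.1.monotone k.zero_le)

end Rooted

section InsertPerm

open Equiv (Perm)

variable {n : ℕ} (i j : Fin (n + 1)) (σ : Perm (Fin n))

/-- The permutation of `Fin (n + 1)` that sends the position `i` to `j` and is order-isomorphic
to `σ` off that position. -/
def insertPerm : Perm (Fin (n + 1)) :=
  i.cycleRange.trans ((Perm.decomposeFin.symm (0, σ)).trans j.cycleRange.symm)

lemma insertPerm_apply_self : insertPerm i j σ i = j := by
  simp [insertPerm]

lemma insertPerm_apply_succAbove (k : Fin n) :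
    insertPerm i j σ (i.succAbove k) = j.succAbove (σ k) := by
  simp [insertPerm]

lemma sign_insertPerm :
    (Perm.sign (insertPerm i j σ) : ℤ) = (-1) ^ (i + j : ℕ) * Perm.sign σ := by
  simp only [insertPerm, Perm.sign_trans, Perm.sign_symm, Fin.sign_cycleRange,
    Perm.decomposeFin.symm_sign, if_true, one_mul]
  push_cast
  ring

lemma bijective_insertPerm :
    Function.Bijective fun w : Fin (n + 1) × Perm (Fin n) => insertPerm i w.1 w.2 := by
  rw [Fintype.bijective_iff_injective_and_card]
  refine ⟨?_, Fintype.card_congr Perm.decomposeFin.symm⟩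
  rintro ⟨j, σ⟩ ⟨j', σ'⟩ h
  have happly (k : Fin (n + 1)) : insertPerm i j σ k = insertPerm i j' σ' k :=
    DFunLike.congr_fun h k
  obtain rfl : j = j' := by simpa only [insertPerm_apply_self] using happly i
  obtain rfl : σ = σ' := Equiv.ext fun k => by
    simpa only [insertPerm_apply_succAbove, Fin.succAbove_right_inj] using happly (i.succAbove k)
  rfl

lemma sum_perm_eq_sum_insertPerm {M : Type*} [AddCommMonoid M] (f : Perm (Fin (n + 1)) → M) :
    ∑ τ, f τ = ∑ j, ∑ σ, f (insertPerm i j σ) := by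
  rw [← Fintype.sum_prod_type', ← (bijective_insertPerm i).sum_comp]

end InsertPerm

section Contraction

variable {g A : Type*} [AddCommGroup A] (br : g → g → g) {a n : ℕ}

/-- The tuple `(x₀, …, [x_i, x_j], …, x̂_j, …, x_n)`, where `m` is the place of `i` among the
indices different from `j`. -/
def bracketContract (j : Fin (n + 1)) (m : Fin n) (x : Fin (n + 1) → g) : Fin n → g :=
  Function.update (j.removeNth x) m (br (x (j.succAbove m)) (x j))

lemma leibnizCochainTuple_succAbove (x : Fin (n + 1) → g) {j : Fin (n + 1)} {m : Fin n}
    (hmj : m.castSucc < j) :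
    leibnizCochainTuple br x (j.succAbove m) j = bracketContract br j m x := by
  funext k
  rw [leibnizCochainTuple, bracketContract, Function.update_apply,
    Fin.succAbove_of_castSucc_lt _ _ hmj]
  simp only [Fin.val_castSucc, Fin.val_inj, Fin.removeNth, Fin.succAbove, Fin.lt_def]
  split_ifs <;> rfl

lemma bracketContract_comp_insertNth (x : Fin (n + 1) → g) (j : Fin (n + 1)) {f : Fin a → Fin n}
    (hf : Function.Injective f) (l : Fin (a + 1)) (k : Fin a) :
    bracketContract br l k (x ∘ l.insertNth (α := fun _ => Fin (n + 1)) j (j.succAbove ∘ f)) =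
      bracketContract br j (f k) x ∘ f := by
  rw [bracketContract, bracketContract, Function.update_comp_eq_of_injective _ hf]
  congr 1
  · funext i
    simp [Fin.removeNth]
  · simp

lemma bracketContract_comp_of_notMem_range (x : Fin (n + 1) → g) (j : Fin (n + 1)) {m : Fin n}
    {f : Fin a → Fin n} (hm : m ∉ Set.range f) :
    bracketContract br j m x ∘ f = x ∘ j.succAbove ∘ f :=
  Function.update_comp_eq_of_notMem_range _ _ hm

/-- The sum of the values of `c` on all contractions of `x` in which `x_j` is bracketed into an
earlier entry, that is, the part of `leibnizDelta br c x` with second index `j` and no sign. -/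
def contractionSum (c : (Fin n → g) → A) (j : Fin (n + 1)) (x : Fin (n + 1) → g) : A :=
  ∑ m : Fin n with m.castSucc < j, c (bracketContract br j m x)

lemma leibnizDelta_eq_sum_contractionSum (c : (Fin n → g) → A) (x : Fin (n + 1) → g) :
    leibnizDelta br c x = ∑ j : Fin (n + 1), (-1 : ℤ) ^ (j + 1 : ℕ) • contractionSum br c j x := by
  rw [leibnizDelta, Fintype.sum_prod_type_right]
  refine Finset.sum_congr rfl fun j _ => ?_
  rw [Fin.sum_univ_succAbove _ j, if_neg (lt_irrefl j), zero_add, contractionSum, Finset.smul_sum,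
    Finset.sum_filter]
  refine Finset.sum_congr rfl fun m _ => ?_
  simp only [Fin.succAbove_lt_iff_castSucc_lt]
  split_ifs with hmj
  · rw [leibnizCochainTuple_succAbove br x hmj]
  · rfl

lemma contractionSum_comp_insertNth (c : (Fin a → g) → A) (x : Fin (n + 1) → g) {j : Fin (n + 1)}
    {f : Fin a → Fin n} {l : Fin (a + 1)}
    (hl : StrictMono (l.insertNth (α := fun _ => Fin (n + 1)) j (j.succAbove ∘ f))) :
    contractionSum br c l (x ∘ l.insertNth (α := fun _ => Fin (n + 1)) j (j.succAbove ∘ f)) =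
      ∑ k with (f k).castSucc < j, c (bracketContract br j (f k) x ∘ f) := by
  obtain ⟨hmono, hbelow, habove⟩ := (Fin.strictMono_insertNth_iff _ _ _).1 hl
  have hlt (k : Fin a) : k.castSucc < l ↔ (f k).castSucc < j := by
    rw [← Fin.succAbove_lt_iff_castSucc_lt j]
    exact ⟨hbelow k, fun h => not_le.1 fun hlk => lt_asymm h (habove k hlk)⟩
  simp only [contractionSum, hlt,
    bracketContract_comp_insertNth br x j hmono.injective.of_comp]

end Contraction

section RootedShuffle

open Equiv (Perm)

variable {a b n : ℕ} {r s : Prop}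

/-- A permutation which is strictly increasing on the blocks of positions `u` and `v`, where `r`
and `s` tell whether the value `0` is taken on `u` and on `v`. A shuffle fixing the leading
position, as in the cup product, is the case `r = True`, `s = False`; the symmetric formulation
allows the two blocks to be interchanged. -/
def IsRootedShuffle [NeZero n] (r s : Prop) (u : Fin a → Fin n) (v : Fin b → Fin n)
    (σ : Perm (Fin n)) : Prop :=
  IsRootedBlock r (σ ∘ u) ∧ IsRootedBlock s (σ ∘ v)

lemma isRootedShuffle_comm [NeZero n] (u : Fin a → Fin n) (v : Fin b → Fin n) :
    IsRootedShuffle r s u v = IsRootedShuffle s r v u :=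
  funext fun _ => propext and_comm

/-- The blocks `u`, `v` in `Fin (n + 1)` arise from `u₀`, `v₀` in `Fin n` by adding one position
to the first block, which occupies an interval starting at `m`. -/
structure IsBlockExtension (m : ℕ) (u₀ : Fin a → Fin n) (v₀ : Fin b → Fin n)
    (u : Fin (a + 1) → Fin (n + 1)) (v : Fin b → Fin (n + 1)) : Prop where
  val_left : ∀ l, (u l : ℕ) = m + l
  left_succAbove : ∀ l k, u (l.succAbove k) = (u l).succAbove (u₀ k)
  right_eq_succAbove : ∀ l k, v k = (u l).succAbove (v₀ k)

namespace IsBlockExtension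

variable {m : ℕ} {u₀ : Fin a → Fin n} {v₀ : Fin b → Fin n}
  {u : Fin (a + 1) → Fin (n + 1)} {v : Fin b → Fin (n + 1)}

lemma left_ne_right (hext : IsBlockExtension m u₀ v₀ u v) (k : Fin a) (t : Fin b) :
    u₀ k ≠ v₀ t := by
  intro heq
  refine Fin.succAbove_ne (u ((0 : Fin (a + 1)).succAbove k)) (v₀ t) ?_
  rw [← hext.right_eq_succAbove, hext.left_succAbove, heq, ← hext.right_eq_succAbove]

lemma insertPerm_comp_left (hext : IsBlockExtension m u₀ v₀ u v) (l : Fin (a + 1))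
    (j : Fin (n + 1)) (σ : Perm (Fin n)) :
    insertPerm (u l) j σ ∘ u =
      l.insertNth (α := fun _ => Fin (n + 1)) j (j.succAbove ∘ σ ∘ u₀) := by
  refine Fin.eq_insertNth_iff.2 ⟨insertPerm_apply_self .., ?_⟩
  funext k
  simp only [Fin.removeNth, Function.comp_apply, hext.left_succAbove, insertPerm_apply_succAbove]

lemma insertPerm_comp_right (hext : IsBlockExtension m u₀ v₀ u v) (l : Fin (a + 1))
    (j : Fin (n + 1)) (σ : Perm (Fin n)) :
    insertPerm (u l) j σ ∘ v = j.succAbove ∘ σ ∘ v₀ := by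
  funext k
  simp only [Function.comp_apply, hext.right_eq_succAbove l, insertPerm_apply_succAbove]

lemma sum_ite_isRootedShuffle_insertPerm [NeZero n] (hext : IsBlockExtension m u₀ v₀ u v)
    {j : Fin (n + 1)} (hj : j ≠ 0) (σ : Perm (Fin n)) {M : Type*} [AddCommMonoid M] (t : M) :
    ∑ l, (if IsRootedShuffle r s u v (insertPerm (u l) j σ) then t else 0) =
      if IsRootedShuffle r s u₀ v₀ σ then t else 0 := by
  simp only [IsRootedShuffle, hext.insertPerm_comp_left, hext.insertPerm_comp_right,
    isRootedBlock_succAbove_comp_iff hj]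
  by_cases hσ : IsRootedBlock r (σ ∘ u₀)
  · obtain ⟨l, hl, hunique⟩ := existsUnique_isRootedBlock_insertNth hj hσ
    rw [Fintype.sum_eq_single l fun l' hl' => if_neg fun h => hl' (hunique l' h.1)]
    simp only [hl, hσ]
  · simp only [isRootedBlock_insertNth_iff hj, hσ, false_and, if_false, Finset.sum_const_zero]

end IsBlockExtension

end RootedShuffle

section ShuffleSum

open Equiv (Perm)

variable {g A : Type*} [CommRing A] {a b n : ℕ} {r s : Prop}

/-- The signed sum of `c (x ∘ σ ∘ u) * d (x ∘ σ ∘ v)` over the rooted shuffles `σ` of the blocks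
`u` and `v`; the cup product is an instance by `cupProd_eq_shuffleSum`. -/
noncomputable def shuffleSum [NeZero n] (r s : Prop) (u : Fin a → Fin n) (v : Fin b → Fin n)
    (c : (Fin a → g) → A) (d : (Fin b → g) → A) (x : Fin n → g) : A :=
  ∑ σ : Perm (Fin n) with IsRootedShuffle r s u v σ,
    (Perm.sign σ : ℤ) • (c (x ∘ σ ∘ u) * d (x ∘ σ ∘ v))

lemma shuffleSum_comm [NeZero n] (u : Fin a → Fin n) (v : Fin b → Fin n)
    (c : (Fin a → g) → A) (d : (Fin b → g) → A) (x : Fin n → g) :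
    shuffleSum r s u v c d x = shuffleSum s r v u d c x := by
  rw [shuffleSum, isRootedShuffle_comm]
  simp only [shuffleSum, mul_comm]

/-- The sum of the products `c (y ∘ σ ∘ u) * d (y ∘ σ ∘ v)` over the contractions `y` of `x` in
which `x_j` is bracketed into an earlier entry whose index is a value of `σ` on the block `w`. -/
def blockContraction (br : g → g → g) {e : ℕ} (w : Fin e → Fin n) (u : Fin a → Fin n)
    (v : Fin b → Fin n) (c : (Fin a → g) → A) (d : (Fin b → g) → A) (x : Fin (n + 1) → g)
    (j : Fin (n + 1)) (σ : Perm (Fin n)) : A :=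
  ∑ k with (σ (w k)).castSucc < j,
    c (bracketContract br j (σ (w k)) x ∘ σ ∘ u) * d (bracketContract br j (σ (w k)) x ∘ σ ∘ v)

lemma blockContraction_zero (br : g → g → g) {e : ℕ} (w : Fin e → Fin n) (u : Fin a → Fin n)
    (v : Fin b → Fin n) (c : (Fin a → g) → A) (d : (Fin b → g) → A) (x : Fin (n + 1) → g)
    (σ : Perm (Fin n)) :
    blockContraction br w u v c d x 0 σ = 0 := by
  simp only [blockContraction, Fin.not_lt_zero, Finset.filter_false, Finset.sum_empty]

/-- The part of the coboundary of a shuffle sum in which the bracket is an argument taken from the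
block `w`. -/
noncomputable def blockContractionSum [NeZero n] (br : g → g → g) (r s : Prop) {e : ℕ}
    (w : Fin e → Fin n) (u : Fin a → Fin n) (v : Fin b → Fin n)
    (c : (Fin a → g) → A) (d : (Fin b → g) → A) (x : Fin (n + 1) → g) : A :=
  ∑ j : Fin (n + 1), (-1 : ℤ) ^ (j + 1 : ℕ) •
    ∑ σ : Perm (Fin n) with IsRootedShuffle r s u v σ,
      (Perm.sign σ : ℤ) • blockContraction br w u v c d x j σ

lemma blockContractionSum_comm [NeZero n] (br : g → g → g) {e : ℕ}
    (w : Fin e → Fin n) (u : Fin a → Fin n) (v : Fin b → Fin n)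
    (c : (Fin a → g) → A) (d : (Fin b → g) → A) (x : Fin (n + 1) → g) :
    blockContractionSum br r s w u v c d x = blockContractionSum br s r w v u d c x := by
  rw [blockContractionSum, isRootedShuffle_comm]
  simp only [blockContractionSum, blockContraction, mul_comm]

lemma leibnizDelta_shuffleSum [NeZero n] (br : g → g → g) {u : Fin a → Fin n} {v : Fin b → Fin n}
    (huv : Function.Bijective (Sum.elim u v))
    (c : (Fin a → g) → A) (d : (Fin b → g) → A) (x : Fin (n + 1) → g) :
    leibnizDelta br (shuffleSum r s u v c d) x =
      blockContractionSum br r s u u v c d x + blockContractionSum br r s v u v c d x := by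
  have hsplit (σ : Perm (Fin n)) (j : Fin (n + 1)) (f : Fin n → A) :
      ∑ m with m.castSucc < j, f m =
        ∑ k with (σ (u k)).castSucc < j, f (σ (u k)) +
          ∑ k with (σ (v k)).castSucc < j, f (σ (v k)) := by
    simp only [Finset.sum_filter]
    rw [← (σ.bijective.comp huv).sum_comp, Fintype.sum_sum_type]
    rfl
  simp only [leibnizDelta_eq_sum_contractionSum, contractionSum, shuffleSum, blockContractionSum,
    blockContraction, ← Finset.sum_add_distrib, ← smul_add]
  refine Finset.sum_congr rfl fun j _ => ?_
  rw [Finset.sum_comm]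
  congr 1
  refine Finset.sum_congr rfl fun σ _ => ?_
  rw [← hsplit σ j fun m => c (bracketContract br j m x ∘ σ ∘ u) *
    d (bracketContract br j m x ∘ σ ∘ v), Finset.smul_sum]

namespace IsBlockExtension

variable {m : ℕ} {u₀ : Fin a → Fin n} {v₀ : Fin b → Fin n}
  {u : Fin (a + 1) → Fin (n + 1)} {v : Fin b → Fin (n + 1)}

lemma sign_smul_contractionSum_mul (hext : IsBlockExtension m u₀ v₀ u v) (br : g → g → g)
    (c : (Fin a → g) → A) (d : (Fin b → g) → A) (x : Fin (n + 1) → g)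
    {l : Fin (a + 1)} {j : Fin (n + 1)} {σ : Perm (Fin n)}
    (hmono : StrictMono (insertPerm (u l) j σ ∘ u)) :
    (Perm.sign (insertPerm (u l) j σ) : ℤ) • (((-1 : ℤ) ^ (l + 1 : ℕ) •
        contractionSum br c l (x ∘ insertPerm (u l) j σ ∘ u)) * d (x ∘ insertPerm (u l) j σ ∘ v)) =
      (-1 : ℤ) ^ m • (-1 : ℤ) ^ (j + 1 : ℕ) • (Perm.sign σ : ℤ) •
        blockContraction br u₀ u₀ v₀ c d x j σ := by
  have hright (k : Fin a) :
      bracketContract br j (σ (u₀ k)) x ∘ σ ∘ v₀ = x ∘ j.succAbove ∘ σ ∘ v₀ := by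
    refine bracketContract_comp_of_notMem_range br x j ?_
    rintro ⟨t, ht⟩
    exact hext.left_ne_right k t (σ.injective ht).symm
  have hsign : (-1 : ℤ) ^ (m + l + j : ℕ) * (-1) ^ (l + 1 : ℕ) =
      (-1) ^ m * (-1) ^ (j + 1 : ℕ) := by
    rw [← pow_add, ← pow_add, show m + l + j + (l + 1) = m + (j + 1) + 2 * l by ring, pow_add,
      pow_mul, neg_one_sq, one_pow, mul_one]
  rw [hext.insertPerm_comp_left] at hmono ⊢
  rw [hext.insertPerm_comp_right, contractionSum_comp_insertNth br c x hmono, sign_insertPerm,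
    hext.val_left]
  simp only [blockContraction, hright, ← Finset.sum_mul, smul_mul_assoc, smul_smul]
  congr 1
  linear_combination (Perm.sign σ : ℤ) * hsign

lemma shuffleSum_leibnizDelta [NeZero n] (hext : IsBlockExtension m u₀ v₀ u v) (br : g → g → g)
    (c : (Fin a → g) → A) (d : (Fin b → g) → A) (x : Fin (n + 1) → g) :
    shuffleSum r s u v (leibnizDelta br c) d x =
      (-1 : ℤ) ^ m • blockContractionSum br r s u₀ u₀ v₀ c d x := by
  let term (j : Fin (n + 1)) (σ : Perm (Fin n)) : A :=
    (-1 : ℤ) ^ m • (-1 : ℤ) ^ (j + 1 : ℕ) • (Perm.sign σ : ℤ) •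
      blockContraction br u₀ u₀ v₀ c d x j σ
  calc shuffleSum r s u v (leibnizDelta br c) d x
      = ∑ l : Fin (a + 1), ∑ τ : Perm (Fin (n + 1)), if IsRootedShuffle r s u v τ then
          (Perm.sign τ : ℤ) • (((-1 : ℤ) ^ (l + 1 : ℕ) • contractionSum br c l (x ∘ τ ∘ u)) *
            d (x ∘ τ ∘ v)) else 0 := by
        simp only [shuffleSum, leibnizDelta_eq_sum_contractionSum, Finset.sum_mul,
          Finset.smul_sum, ← Finset.sum_filter]
        exact Finset.sum_comm
    _ = ∑ l, ∑ j, ∑ σ, if IsRootedShuffle r s u v (insertPerm (u l) j σ) then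
          term j σ else 0 := by
        refine Finset.sum_congr rfl fun l _ => ?_
        rw [sum_perm_eq_sum_insertPerm (u l)]
        refine Finset.sum_congr rfl fun j _ => Finset.sum_congr rfl fun σ _ => ?_
        split_ifs with hτ
        · exact hext.sign_smul_contractionSum_mul br c d x hτ.1.1
        · rfl
    _ = ∑ j, ∑ σ, ∑ l, if IsRootedShuffle r s u v (insertPerm (u l) j σ) then
          term j σ else 0 := by
        rw [Finset.sum_comm]
        exact Finset.sum_congr rfl fun j _ => Finset.sum_comm
    _ = ∑ j, ∑ σ, if IsRootedShuffle r s u₀ v₀ σ then term j σ else 0 := by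
        refine Finset.sum_congr rfl fun j _ => Finset.sum_congr rfl fun σ _ => ?_
        rcases eq_or_ne j 0 with rfl | hj
        · simp only [term, blockContraction_zero, smul_zero, ite_self, Finset.sum_const_zero]
        · exact hext.sum_ite_isRootedShuffle_insertPerm hj σ _
    _ = (-1 : ℤ) ^ m • blockContractionSum br r s u₀ u₀ v₀ c d x := by
        simp only [blockContractionSum, Finset.smul_sum, term, ← Finset.sum_filter]

end IsBlockExtension

end ShuffleSum

section ConsecutiveBlocks

open Equiv (Perm)

variable {a b n : ℕ}

/-- The block of the first `a` positions in `Fin n`, where `n = a + b`. -/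
def firstBlock (h : a + b = n) (i : Fin a) : Fin n :=
  Fin.cast h (i.castAdd b)

/-- The block of the last `b` positions in `Fin n`, where `n = a + b`. -/
def secondBlock (h : a + b = n) (i : Fin b) : Fin n :=
  Fin.cast h (i.natAdd a)

lemma bijective_sumElim_blocks (h : a + b = n) :
    Function.Bijective (Sum.elim (firstBlock h) (secondBlock h)) := by
  convert (finSumFinEquiv.trans (finCongr h)).bijective using 1
  funext i
  cases i <;> rfl

lemma isBlockExtension_firstBlock (h : a + b = n) (h' : a + 1 + b = n + 1) :
    IsBlockExtension 0 (firstBlock h) (secondBlock h) (firstBlock h') (secondBlock h') where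
  val_left l := (zero_add _).symm
  left_succAbove l k := by
    ext
    simp only [firstBlock, Fin.succAbove, Fin.lt_def, Fin.val_castSucc, Fin.val_cast,
      Fin.val_castAdd]
    split_ifs <;> rfl
  right_eq_succAbove l k := by
    have hle : firstBlock h' l ≤ (secondBlock h k).castSucc := by
      simp only [Fin.le_def, firstBlock, secondBlock, Fin.val_castSucc, Fin.val_cast,
        Fin.val_castAdd, Fin.val_natAdd]
      omega
    rw [Fin.succAbove_of_le_castSucc _ _ hle]
    ext
    simp only [secondBlock, Fin.val_succ, Fin.val_cast, Fin.val_natAdd]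
    omega

lemma isBlockExtension_secondBlock (h : a + b = n) (h' : a + (b + 1) = n + 1) :
    IsBlockExtension a (secondBlock h) (firstBlock h) (secondBlock h') (firstBlock h') where
  val_left l := rfl
  left_succAbove l k := by
    ext
    simp only [secondBlock, Fin.succAbove, Fin.lt_def, Fin.val_castSucc, Fin.val_cast,
      Fin.val_natAdd, add_lt_add_iff_left]
    split_ifs <;> rfl
  right_eq_succAbove l k := by
    have hlt : (firstBlock h k).castSucc < secondBlock h' l := by
      simp only [Fin.lt_def, firstBlock, secondBlock, Fin.val_castSucc, Fin.val_cast,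
        Fin.val_castAdd, Fin.val_natAdd]
      omega
    rw [Fin.succAbove_of_castSucc_lt _ _ hlt]
    rfl

lemma isShuffle_iff (σ : Perm (Fin (a + b))) :
    IsShuffle a b σ ↔ StrictMono (σ ∘ Fin.castAdd b) ∧ StrictMono (σ ∘ Fin.natAdd a) := by
  refine and_congr ⟨fun h i i' hi => h _ _ hi i'.2, fun h i i' hi hi' => ?_⟩
    ⟨fun h i i' hi => h _ _ (Nat.add_lt_add_left hi a) (Fin.le_coe_natAdd a i),
      fun h i i' hi hi' => ?_⟩
  · exact @h ⟨i, hi.trans hi'⟩ ⟨i', hi'⟩ hi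
  · have hcast {k : Fin (a + b)} (hk : a ≤ k) := Fin.natAdd_subNat_cast hk
    rw [← hcast hi', ← hcast (hi'.trans hi.le)]
    exact h (Nat.sub_lt_sub_right hi' hi)

end ConsecutiveBlocks

section CupProduct

open Equiv (Perm)

variable {g A : Type*} [CommRing A] {p q n : ℕ}

lemma insertPerm_zero_comp_firstBlock (h : p + 1 + q = p + q + 1) (σ : Perm (Fin (p + q))) :
    insertPerm 0 0 σ ∘ firstBlock h =
      Fin.cons (α := fun _ => Fin (p + q + 1)) 0 (Fin.succ ∘ σ ∘ Fin.castAdd q) := by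
  funext i
  cases i using Fin.cases with
  | zero => exact insertPerm_apply_self 0 0 σ
  | succ k => exact insertPerm_apply_succAbove 0 0 σ (k.castAdd q)

lemma insertPerm_zero_comp_secondBlock (h : p + 1 + q = p + q + 1) (σ : Perm (Fin (p + q))) :
    insertPerm 0 0 σ ∘ secondBlock h = Fin.succ ∘ σ ∘ Fin.natAdd p := by
  funext k
  have hk : secondBlock h k = Fin.succAbove 0 (k.natAdd p) :=
    Fin.ext (Nat.add_right_comm p 1 k)
  exact (congrArg _ hk).trans (insertPerm_apply_succAbove 0 0 σ (k.natAdd p))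

lemma cupProd_eq_shuffleSum (h : p + 1 + (q + 1) = n + 1) (h' : p + q + 2 = n + 1)
    (c : (Fin (p + 1) → g) → A) (d : (Fin (q + 1) → g) → A) (x : Fin (n + 1) → g) :
    cupProd c d (fun i => x (Fin.cast h' i)) =
      shuffleSum True False (firstBlock h) (secondBlock h) c d x := by
  obtain rfl : n = p + (q + 1) := by omega
  have hroot (j : Fin (p + (q + 1) + 1)) (σ : Perm (Fin (p + (q + 1)))) (hj : j ≠ 0) :
      ¬ IsRootedShuffle True False (firstBlock h) (secondBlock h) (insertPerm 0 j σ) := by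
    intro hσ
    exact hj ((insertPerm_apply_self 0 j σ).symm.trans hσ.1.apply_zero)
  rw [shuffleSum, Finset.sum_filter, sum_perm_eq_sum_insertPerm 0, Fintype.sum_eq_single 0
    fun j hj => Finset.sum_eq_zero fun σ _ => if_neg (hroot j σ hj), cupProd]
  refine Finset.sum_congr rfl fun σ _ => ?_
  simp only [IsRootedShuffle, insertPerm_zero_comp_firstBlock, insertPerm_zero_comp_secondBlock,
    isRootedBlock_true_cons_succ_iff, isRootedBlock_false_succ_comp_iff, isShuffle_iff,
    sign_insertPerm]
  split_ifs with hσ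
  · have hcons : (fun i : Fin (p + 1) => if hi : (i : ℕ) = 0 then x (Fin.cast h' ⟨0, by omega⟩)
        else x (Fin.cast h' ⟨(σ ⟨i - 1, by omega⟩ : ℕ) + 1, by omega⟩)) =
        x ∘ Fin.cons (α := fun _ => Fin (p + (q + 1) + 1)) 0
          (Fin.succ ∘ σ ∘ Fin.castAdd (q + 1)) := by
      funext i
      cases i using Fin.cases <;> rfl
    rw [hcons, Fin.val_zero, add_zero, pow_zero, one_mul]
    rfl
  · rfl

theorem leibniz_delta_cupProd_general (br : g → g → g)
    (c : (Fin (p + 1) → g) → A) (d : (Fin (q + 1) → g) → A) (x : Fin (p + q + 3) → g) :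
    leibnizDelta br (cupProd c d) x =
      cupProd (p := p + 1) (q := q) (leibnizDelta br c) d
          (fun i : Fin (p + 1 + q + 2) =>
            x (Fin.cast (congrArg (· + 2) (Nat.add_right_comm p 1 q)) i)) +
        ((-1 : ℤ) ^ (p + 1)) •
          cupProd (p := p) (q := q + 1) c (leibnizDelta br d)
            (fun i : Fin (p + (q + 1) + 2) => x (Fin.cast rfl i)) := by
  have h : p + 1 + (q + 1) = p + q + 1 + 1 := by omega
  have hleft : p + 1 + 1 + (q + 1) = p + q + 2 + 1 := by omega
  have hright : p + 1 + (q + 1 + 1) = p + q + 2 + 1 := by omega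
  have hcup : cupProd c d = shuffleSum True False (firstBlock h) (secondBlock h) c d :=
    funext fun y => cupProd_eq_shuffleSum h rfl c d y
  have hdelta_left :
      shuffleSum True False (firstBlock hleft) (secondBlock hleft) (leibnizDelta br c) d x =
        blockContractionSum br True False (firstBlock h) (firstBlock h) (secondBlock h) c d x := by
    rw [(isBlockExtension_firstBlock h hleft).shuffleSum_leibnizDelta, pow_zero, one_smul]
  have hdelta_right :
      shuffleSum True False (firstBlock hright) (secondBlock hright) c (leibnizDelta br d) x =
        (-1 : ℤ) ^ (p + 1) •
          blockContractionSum br True False (secondBlock h) (firstBlock h) (secondBlock h)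
            c d x := by
    rw [shuffleSum_comm, (isBlockExtension_secondBlock h hright).shuffleSum_leibnizDelta,
      blockContractionSum_comm]
  rw [hcup, leibnizDelta_shuffleSum br (bijective_sumElim_blocks h), cupProd_eq_shuffleSum hleft,
    cupProd_eq_shuffleSum hright, hdelta_left, hdelta_right, smul_smul, ← mul_pow, neg_one_mul,
    neg_neg, one_pow, one_smul]

end CupProduct

/-- For a Leibniz algebra `g` over a field `K` and a commutative associative `K`-algebra
`A`, the Leibniz coboundary `δ` is a graded derivation with respect to the shuffle cup
product: `δ(c∪d) = (δc)∪d + (-1)^{p'} c∪(δd)`, where `p' = p + 1` is the degree of the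
cochain `c : g^{p+1} → A`. -/
theorem leibniz_delta_cupProd
    {K : Type*} [Field K] {g : Type*} [AddCommGroup g] [Module K g]
    {A : Type*} [CommRing A] [Algebra K A]
    (b : g →ₗ[K] g →ₗ[K] g)
    (hleib : ∀ x y z : g, b x (b y z) = b (b x y) z - b (b x z) y)
    {p q : ℕ}
    (c : MultilinearMap K (fun _ : Fin (p + 1) => g) A)
    (d : MultilinearMap K (fun _ : Fin (q + 1) => g) A) :
    ∀ x : Fin (p + q + 3) → g,
      leibnizDelta (fun u v => b u v) (cupProd ⇑c ⇑d) x =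
        cupProd (p := p + 1) (q := q) (leibnizDelta (fun u v => b u v) ⇑c) ⇑d
            (fun i : Fin (p + 1 + q + 2) => x (Fin.cast (by omega) i)) +
          ((-1 : ℤ) ^ (p + 1)) •
            cupProd (p := p) (q := q + 1) ⇑c (leibnizDelta (fun u v => b u v) ⇑d)
              (fun i : Fin (p + (q + 1) + 2) => x (Fin.cast (by omega) i)) :=
  leibniz_delta_cupProd_general (fun u v => b u v) c d
end
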